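/- Let H be a real Hilbert space, A : H → H' a self-adjoint bounded operator satisfying ⟨A x, y⟩ = ⟨A y, x⟩, and P : H' → H a self-adjoint positive definite operator (a Riesz-map preconditioner). Suppose that the norm ‖x‖_P² := ⟨P^{-1} x, x⟩ is equivalent to the norm in which A satisfies both boundedness |⟨A x, y⟩| ≤ C3 ‖x‖ ‖y‖ and the inf-sup condition inf_x sup_y ⟨Ax, y⟩/(‖x‖‖y‖) ≥ c > 0. Then the spectrum of the preconditioned operator P A is contained in [-C3/c', -c''] ∪ [c'', C3/c'] for constants c', c'' depending only on c, C3 and the norm-equivalence constants; in particular the spectral condition number of P A is bounded independently of any parameters entering only through the norm. -/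

import Mathlib

/-!
Let `R = P⁻¹`. The preconditioned operator `T = P A` is self-adjoint for the energy form
`⟨R x, y⟩`. An energy-self-adjoint operator that is bounded below in the energy norm is
invertible: its range is closed, and a functional `R z` vanishing on it satisfies `R (S z) = 0`.
Hence every `l ∈ spectrum ℝ T` is an approximate eigenvalue, and testing
`⟨A x, y⟩ = l ⟨R x, y⟩ - ⟨R (l x - T x), y⟩` on approximate eigenvectors `x`, with `y` from the
inf-sup condition or `y = x`, bounds `|l|` below and above.
-/

theorem topologicalClosure_eq_top_of_forall_dual {𝕜 E : Type*} [RCLike 𝕜] [NormedAddCommGroup E]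
    [NormedSpace 𝕜 E] {p : Submodule 𝕜 E}
    (hp : ∀ f : StrongDual 𝕜 E, (∀ x ∈ p, f x = 0) → f = 0) : p.topologicalClosure = ⊤ := by
  set q := p.topologicalClosure
  have : IsClosed (q : Set E) := p.isClosed_topologicalClosure
  rw [Submodule.eq_top_iff']
  intro x
  rw [← Submodule.Quotient.mk_eq_zero]
  refine SeparatingDual.eq_zero_of_forall_dual_eq_zero (R := 𝕜) fun g ↦ ?_
  have hg : g ∘L q.mkQL = 0 := hp _ fun y hy ↦ by
    have hyq : q.mkQ y = 0 := (Submodule.Quotient.mk_eq_zero q).2 (p.le_topologicalClosure hy)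
    simp [hyq]
  simpa using congr($hg x)

theorem isUnit_of_antilipschitzWith_of_symmetric {𝕜 E : Type*} [RCLike 𝕜] [NormedAddCommGroup E]
    [NormedSpace 𝕜 E] (R : E ≃L[𝕜] StrongDual 𝕜 E) {S : E →L[𝕜] E} {K : NNReal}
    (hS : ∀ x y, R (S x) y = R x (S y)) (hK : AntilipschitzWith K S) : IsUnit S := by
  have : CompleteSpace E := (completeSpace_congr (e := R.toEquiv) R.isUniformEmbedding).2
    inferInstance
  rw [ContinuousLinearMap.isUnit_iff_bijective,
    ContinuousLinearMap.bijective_iff_dense_range_and_antilipschitz]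
  refine ⟨topologicalClosure_eq_top_of_forall_dual fun f hf ↦ ?_, K, hK⟩
  obtain ⟨z, rfl⟩ := R.surjective f
  have hRSz : R (S z) = 0 := by
    ext x
    rw [hS]
    exact hf (S x) ⟨x, rfl⟩
  have hz : z = 0 := hK.injective (by rw [R.map_eq_zero_iff.1 hRSz, map_zero])
  rw [hz, map_zero]

/-- A Riesz map: a topological isomorphism of `H` onto its dual whose form `R x y` is symmetric and
nonnegative. No inner product on `H` is presupposed; definiteness comes from invertibility. -/
structure IsRieszMap {H : Type*} [NormedAddCommGroup H] [NormedSpace ℝ H]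
    (R : H ≃L[ℝ] StrongDual ℝ H) : Prop where
  symm : ∀ x y, R x y = R y x
  nonneg : ∀ x, 0 ≤ R x x

/-- The norm `√⟨R x, x⟩` induced by a Riesz map; for `R = P⁻¹` it is the norm `‖x‖_P` of the
preconditioner `P`. -/
noncomputable def energyNorm {H : Type*} [NormedAddCommGroup H] [NormedSpace ℝ H]
    (R : H ≃L[ℝ] StrongDual ℝ H) (x : H) : ℝ :=
  √(R x x)

section EnergyNorm

variable {H : Type*} [NormedAddCommGroup H] [NormedSpace ℝ H] (R : H ≃L[ℝ] StrongDual ℝ H)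

theorem energyNorm_nonneg (x : H) : 0 ≤ energyNorm R x :=
  Real.sqrt_nonneg _

theorem energyNorm_smul (a : ℝ) (x : H) : energyNorm R (a • x) = |a| * energyNorm R x := by
  have hform : R (a • x) (a • x) = a ^ 2 * R x x := by
    simp only [map_smul, smul_apply, smul_eq_mul]
    ring
  rw [energyNorm, hform, Real.sqrt_mul (sq_nonneg a), Real.sqrt_sq_eq_abs, energyNorm]

theorem energyNorm_le_mul_norm (x : H) : energyNorm R x ≤ √‖R.toContinuousLinearMap‖ * ‖x‖ := by
  refine Real.sqrt_le_iff.2 ⟨by positivity, ?_⟩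
  rw [mul_pow, Real.sq_sqrt (norm_nonneg R.toContinuousLinearMap)]
  calc R x x ≤ ‖R x x‖ := Real.le_norm_self _
    _ ≤ ‖R.toContinuousLinearMap‖ * ‖x‖ * ‖x‖ := R.toContinuousLinearMap.le_opNorm₂ x x
    _ = ‖R.toContinuousLinearMap‖ * ‖x‖ ^ 2 := by ring

end EnergyNorm

namespace IsRieszMap

variable {H : Type*} [NormedAddCommGroup H] [NormedSpace ℝ H] {R : H ≃L[ℝ] StrongDual ℝ H}

theorem of_inverse {P : StrongDual ℝ H →L[ℝ] H} (hsymm : ∀ f g : StrongDual ℝ H, f (P g) = g (P f))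
    (hpos : ∀ f : StrongDual ℝ H, f ≠ 0 → 0 < f (P f)) (hPR : ∀ x, P (R x) = x) :
    IsRieszMap R where
  symm x y := by simpa only [hPR] using hsymm (R x) (R y)
  nonneg x := by
    rcases eq_or_ne (R x) 0 with hx | hx
    · simp [hx]
    · simpa only [hPR] using (hpos (R x) hx).le

theorem sq_energyNorm (hR : IsRieszMap R) (x : H) : energyNorm R x ^ 2 = R x x :=
  Real.sq_sqrt (hR.nonneg x)

theorem abs_apply_le (hR : IsRieszMap R) (x y : H) :
    |R x y| ≤ energyNorm R x * energyNorm R y := by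
  rw [energyNorm, energyNorm, ← Real.sqrt_mul (hR.nonneg x)]
  exact Real.abs_le_sqrt <| LinearMap.BilinForm.apply_sq_le_of_symm
    R.toContinuousLinearMap.toBilinForm hR.nonneg ⟨hR.symm⟩ x y

theorem norm_le_mul_energyNorm (hR : IsRieszMap R) (x : H) :
    ‖x‖ ≤ ‖R.symm.toContinuousLinearMap‖ * √‖R.toContinuousLinearMap‖ * energyNorm R x := by
  have hRx : ‖R x‖ ≤ energyNorm R x * √‖R.toContinuousLinearMap‖ := by
    refine ContinuousLinearMap.opNorm_le_bound _
      (mul_nonneg (energyNorm_nonneg R x) (Real.sqrt_nonneg _)) fun y ↦ ?_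
    calc ‖R x y‖ ≤ energyNorm R x * energyNorm R y := hR.abs_apply_le x y
      _ ≤ energyNorm R x * (√‖R.toContinuousLinearMap‖ * ‖y‖) :=
        mul_le_mul_of_nonneg_left (energyNorm_le_mul_norm R y) (energyNorm_nonneg R x)
      _ = energyNorm R x * √‖R.toContinuousLinearMap‖ * ‖y‖ := by ring
  calc ‖x‖ = ‖R.symm.toContinuousLinearMap (R x)‖ := by simp
    _ ≤ ‖R.symm.toContinuousLinearMap‖ * ‖R x‖ := ContinuousLinearMap.le_opNorm _ _
    _ ≤ ‖R.symm.toContinuousLinearMap‖ *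
        (energyNorm R x * √‖R.toContinuousLinearMap‖) := by gcongr
    _ = _ := by ring

theorem isUnit_of_energyNorm_le (hR : IsRieszMap R) {S : H →L[ℝ] H}
    (hS : ∀ x y, R (S x) y = R x (S y)) {δ : ℝ} (hδ : 0 < δ)
    (hbelow : ∀ x, δ * energyNorm R x ≤ energyNorm R (S x)) : IsUnit S := by
  have hnorm (x : H) : ‖x‖ ≤ ‖R.symm.toContinuousLinearMap‖ * √‖R.toContinuousLinearMap‖ *
      (δ⁻¹ * √‖R.toContinuousLinearMap‖) * ‖S x‖ :=
    calc ‖x‖ ≤ ‖R.symm.toContinuousLinearMap‖ * √‖R.toContinuousLinearMap‖ * energyNorm R x :=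
        hR.norm_le_mul_energyNorm x
      _ ≤ ‖R.symm.toContinuousLinearMap‖ * √‖R.toContinuousLinearMap‖ *
          (δ⁻¹ * (√‖R.toContinuousLinearMap‖ * ‖S x‖)) := by
        gcongr
        rw [le_inv_mul_iff₀ hδ]
        exact (hbelow x).trans (energyNorm_le_mul_norm R (S x))
      _ = _ := by ring
  exact isUnit_of_antilipschitzWith_of_symmetric R hS
    (S.antilipschitz_of_bound (K := ⟨_, by positivity⟩) hnorm)

variable {T : H →L[ℝ] H} {l : ℝ}

theorem exists_energyNorm_smul_sub_lt_of_mem_spectrum (hR : IsRieszMap R)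
    (hT : ∀ x y, R (T x) y = R x (T y)) (hl : l ∈ spectrum ℝ T) {ε : ℝ} (hε : 0 < ε) :
    ∃ x, energyNorm R (l • x - T x) < ε * energyNorm R x := by
  by_contra! hbelow
  have hS (x : H) : (algebraMap ℝ (H →L[ℝ] H) l - T) x = l • x - T x := by
    simp [Algebra.algebraMap_eq_smul_one]
  refine hl (hR.isUnit_of_energyNorm_le (fun x y ↦ ?_) hε fun x ↦ ?_)
  · simp [hS, hT]
  · simpa only [hS] using hbelow x

theorem le_abs_of_mem_spectrum (hR : IsRieszMap R) (hT : ∀ x y, R (T x) y = R x (T y)) {m : ℝ}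
    (hm : ∀ x, ∃ y, energyNorm R y ≤ 1 ∧ m * energyNorm R x ≤ R (T x) y)
    (hl : l ∈ spectrum ℝ T) : m ≤ |l| := by
  refine le_of_forall_pos_le_add fun ε hε ↦ ?_
  obtain ⟨x, hx⟩ := hR.exists_energyNorm_smul_sub_lt_of_mem_spectrum hT hl hε
  have hx0 : 0 < energyNorm R x :=
    pos_of_mul_pos_right ((energyNorm_nonneg R _).trans_lt hx) hε.le
  obtain ⟨y, hy, hxy⟩ := hm x
  have hbound (z : H) : |R z y| ≤ energyNorm R z :=
    (hR.abs_apply_le z y).trans (mul_le_of_le_one_right (energyNorm_nonneg R z) hy)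
  refine le_of_mul_le_mul_right ?_ hx0
  calc m * energyNorm R x ≤ R (T x) y := hxy
    _ = l * R x y - R (l • x - T x) y := by simp
    _ ≤ |l| * |R x y| + |R (l • x - T x) y| := by
      rw [← abs_mul]
      linarith [le_abs_self (l * R x y), neg_abs_le (R (l • x - T x) y)]
    _ ≤ |l| * energyNorm R x + ε * energyNorm R x := by
      gcongr
      exacts [hbound x, (hbound _).trans hx.le]
    _ = (|l| + ε) * energyNorm R x := by ring

theorem abs_le_of_mem_spectrum (hR : IsRieszMap R) (hT : ∀ x y, R (T x) y = R x (T y)) {M : ℝ}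
    (hM : ∀ x, |R (T x) x| ≤ M * energyNorm R x ^ 2) (hl : l ∈ spectrum ℝ T) : |l| ≤ M := by
  refine le_of_forall_pos_le_add fun ε hε ↦ ?_
  obtain ⟨x, hx⟩ := hR.exists_energyNorm_smul_sub_lt_of_mem_spectrum hT hl hε
  have hx0 : 0 < energyNorm R x :=
    pos_of_mul_pos_right ((energyNorm_nonneg R _).trans_lt hx) hε.le
  refine le_of_mul_le_mul_right ?_ (pow_pos hx0 2)
  calc |l| * energyNorm R x ^ 2 = |l * R x x| := by
        rw [hR.sq_energyNorm, abs_mul, abs_of_nonneg (hR.nonneg x)]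
    _ = |R (T x) x + R (l • x - T x) x| := by simp
    _ ≤ |R (T x) x| + |R (l • x - T x) x| := abs_add_le _ _
    _ ≤ M * energyNorm R x ^ 2 + ε * energyNorm R x * energyNorm R x := by
      gcongr
      exacts [hM x, (hR.abs_apply_le _ x).trans (by gcongr)]
    _ = (M + ε) * energyNorm R x ^ 2 := by ring

end IsRieszMap

theorem stmt_12_general {H : Type*} [NormedAddCommGroup H] [NormedSpace ℝ H] {c C3 k1 k2 : ℝ}
    (hc : 0 ≤ c) (hC3 : 0 ≤ C3) (hk1 : 0 ≤ k1) {A : H →L[ℝ] StrongDual ℝ H}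
    {P : StrongDual ℝ H →L[ℝ] H} {Pinv : H →L[ℝ] StrongDual ℝ H} {n : H → ℝ}
    (hA : ∀ x y, A x y = A y x) (hPsymm : ∀ f g : StrongDual ℝ H, f (P g) = g (P f))
    (hPpos : ∀ f : StrongDual ℝ H, f ≠ 0 → 0 < f (P f)) (hPinvP : ∀ f, Pinv (P f) = f)
    (hPPinv : ∀ x, P (Pinv x) = x) (hbdd : ∀ x y, |A x y| ≤ C3 * n x * n y)
    (hinfsup : ∀ x, ∃ y, n y ≤ 1 ∧ A x y ≥ c * n x)
    (hn : ∀ x, k1 * √(Pinv x x) ≤ n x ∧ n x ≤ k2 * √(Pinv x x)) :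
    spectrum ℝ (P.comp A) ⊆
      Set.Icc (-(C3 * k2 ^ 2)) (-(c * k1 ^ 2)) ∪ Set.Icc (c * k1 ^ 2) (C3 * k2 ^ 2) := by
  let R : H ≃L[ℝ] StrongDual ℝ H := .equivOfInverse Pinv P hPPinv hPinvP
  have hR : IsRieszMap R := .of_inverse hPsymm hPpos hPPinv
  have hRPA (x y : H) : R (P.comp A x) y = A x y := congr($(hPinvP (A x)) y)
  have hsymm (x y : H) : R (P.comp A x) y = R x (P.comp A y) := by
    rw [hR.symm x, hRPA, hRPA, hA]
  have hupper (x : H) : |R (P.comp A x) x| ≤ C3 * k2 ^ 2 * energyNorm R x ^ 2 := by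
    have hn0 : 0 ≤ n x := (mul_nonneg hk1 (energyNorm_nonneg R x)).trans (hn x).1
    calc |R (P.comp A x) x| ≤ C3 * n x ^ 2 := by
          rw [hRPA, sq, ← mul_assoc]
          exact hbdd x x
      _ ≤ C3 * (k2 * energyNorm R x) ^ 2 := by
        gcongr
        exact (hn x).2
      _ = C3 * k2 ^ 2 * energyNorm R x ^ 2 := by ring
  have hlower (x : H) :
      ∃ y, energyNorm R y ≤ 1 ∧ c * k1 ^ 2 * energyNorm R x ≤ R (P.comp A x) y := by
    obtain ⟨y, hy, hxy⟩ := hinfsup x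
    refine ⟨k1 • y, ?_, ?_⟩
    · rw [energyNorm_smul, abs_of_nonneg hk1]
      exact (hn y).1.trans hy
    · calc c * k1 ^ 2 * energyNorm R x = k1 * (c * (k1 * energyNorm R x)) := by ring
        _ ≤ k1 * (c * n x) := by
          gcongr
          exact (hn x).1
        _ ≤ k1 * A x y := by gcongr
        _ = R (P.comp A x) (k1 • y) := by rw [hRPA, map_smul, smul_eq_mul]
  intro l hl
  obtain ⟨hl1, hl2⟩ := abs_le.1 (hR.abs_le_of_mem_spectrum hsymm hupper hl)
  exact (le_abs'.1 (hR.le_abs_of_mem_spectrum hsymm hlower hl)).imp (⟨hl1, ·⟩) (⟨·, hl2⟩)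

/-- Operator-preconditioning principle (Mardal–Winther framework, Section 6):
if `A` is self-adjoint and satisfies boundedness and an inf-sup condition in a
norm `n` equivalent to the norm `‖x‖_P = √(⟨P⁻¹x, x⟩)` induced by a
self-adjoint positive-definite Riesz-map preconditioner `P`, then the spectrum
of the preconditioned operator `P ∘ A` is contained in
`[-C3/c', -c''] ∪ [c'', C3/c']` with constants depending only on the inf-sup
constant, the continuity constant, and the norm-equivalence constants. -/
theorem stmt_12 (c C3 k1 k2 : ℝ) (hc : 0 < c) (hC3 : 0 < C3)
    (hk1 : 0 < k1) (hk2 : 0 < k2) :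
    ∃ c' > 0, ∃ c'' > 0,
      ∀ (H : Type) [instH : NormedAddCommGroup H] [instH2 : InnerProductSpace ℝ H]
        [instH3 : CompleteSpace H],
      ∀ (A : H →L[ℝ] (H →L[ℝ] ℝ)) (P : (H →L[ℝ] ℝ) →L[ℝ] H)
        (Pinv : H →L[ℝ] (H →L[ℝ] ℝ)) (n : H → ℝ),
        (∀ x y : H, A x y = A y x) →
        (∀ f g : H →L[ℝ] ℝ, f (P g) = g (P f)) →
        (∀ f : H →L[ℝ] ℝ, f ≠ 0 → 0 < f (P f)) →
        (∀ f : H →L[ℝ] ℝ, Pinv (P f) = f) →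
        (∀ x : H, P (Pinv x) = x) →
        (∀ x y : H, |A x y| ≤ C3 * n x * n y) →
        (∀ x : H, ∃ y : H, n y ≤ 1 ∧ A x y ≥ c * n x) →
        (∀ x : H, k1 * Real.sqrt (Pinv x x) ≤ n x ∧ n x ≤ k2 * Real.sqrt (Pinv x x)) →
        spectrum ℝ (P.comp A) ⊆
          Set.Icc (-(C3 / c')) (-c'') ∪ Set.Icc c'' (C3 / c') := by
  refine ⟨(k2 ^ 2)⁻¹, by positivity, c * k1 ^ 2, by positivity, fun H _ _ _ A P Pinv n ↦ ?_⟩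
  simpa only [div_inv_eq_mul] using stmt_12_general hc.le hC3.le hk1.le
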